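/- arXiv:2511.13537 — 2 statements merged into one kernel-verified Lean document; each statement's English description precedes it below -/
import Mathlib

section
/- Let P ⊆ ℝⁿ be a full-dimensional polytope and let L ⊆ ℝⁿ be an affine subspace of dimension l ≥ 1 such that L ∩ P is either empty or has dimension strictly less than l. Then L contains at most one face of P of dimension l − 1: any two faces of P of dimension l − 1 that are contained in L are equal. -/
/-- A face of a convex set `P`: a nonempty convex subset that is extreme in `P`. -/
def IsFaceOf {n : ℕ} (P F : Set (Fin n → ℝ)) : Prop :=
  F.Nonempty ∧ Convex ℝ F ∧ IsExtreme ℝ P F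

theorem face_aux {n : ℕ} (P F : Set (Fin n → ℝ)) (hF : IsFaceOf P F) (y : Fin n → ℝ)
    (hy : y ∈ affineSpan ℝ F) (hyP : y ∈ P) : y ∈ F := by
  obtain ⟨hne, hc, he⟩ := hF
  obtain ⟨x, hx⟩ := hne.intrinsicInterior hc
  have hxF : x ∈ F := intrinsicInterior_subset hx
  rw [mem_intrinsicInterior] at hx
  obtain ⟨x', hx', rfl⟩ := hx
  have hmem : ∀ s : ℝ, AffineMap.lineMap (x' : Fin n → ℝ) y s ∈ affineSpan ℝ F :=
    fun s => AffineMap.lineMap_mem s x'.2 hy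
  let g : ℝ → affineSpan ℝ F := fun s => ⟨AffineMap.lineMap (x' : Fin n → ℝ) y s, hmem s⟩
  have hg : Continuous g := by
    apply Continuous.subtype_mk
    exact AffineMap.lineMap_continuous
  have hg0 : g 0 = x' := by
    apply Subtype.ext
    simp [g]
  have hev : ∀ᶠ s in nhds (0 : ℝ), g s ∈ interior ((↑) ⁻¹' F : Set (affineSpan ℝ F)) := by
    apply hg.continuousAt.eventually
    rw [hg0]
    exact isOpen_interior.mem_nhds hx'
  obtain ⟨ε, hε, hb⟩ := Metric.eventually_nhds_iff.1 hev
  have h1 : g (-(ε / 2)) ∈ interior ((↑) ⁻¹' F : Set (affineSpan ℝ F)) := by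
    apply hb
    rw [Real.dist_eq, sub_zero, abs_neg, abs_of_pos (by positivity)]
    linarith
  have h2 : AffineMap.lineMap (x' : Fin n → ℝ) y (-(ε / 2)) ∈ F := by
    have h3 := interior_subset h1
    exact h3
  refine he.left_mem_of_mem_openSegment hyP (he.subset h2) hxF ?_
  refine ⟨(ε / 2) / (1 + ε / 2), 1 / (1 + ε / 2), by positivity, by positivity, by field_simp; ring, ?_⟩
  ext i
  simp [AffineMap.lineMap_apply]
  field_simp
  ring

/-- Let `P ⊆ ℝⁿ` be a full-dimensional polytope and `L` an affine subspace
of dimension `l ≥ 1` such that `L ∩ P` is empty or of dimension strictly less than `l`.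
Then any two faces of `P` of dimension `l − 1` contained in `L` coincide. -/
theorem at_most_one_face_in_nonincident_subspace {n l : ℕ}
    (P : Set (Fin n → ℝ)) (t : Finset (Fin n → ℝ)) (hP : P = convexHull ℝ (t : Set (Fin n → ℝ)))
    (hfull : affineSpan ℝ P = ⊤)
    (L : AffineSubspace ℝ (Fin n → ℝ))
    (hL : Module.finrank ℝ L.direction = l) (hl : 1 ≤ l)
    (hLP : (L : Set (Fin n → ℝ)) ∩ P = ∅ ∨
      Module.finrank ℝ (affineSpan ℝ ((L : Set (Fin n → ℝ)) ∩ P)).direction < l)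
    (F₁ F₂ : Set (Fin n → ℝ))
    (hF₁ : IsFaceOf P F₁) (hF₂ : IsFaceOf P F₂)
    (hF₁L : F₁ ⊆ (L : Set (Fin n → ℝ))) (hF₂L : F₂ ⊆ (L : Set (Fin n → ℝ)))
    (hdim₁ : Module.finrank ℝ (affineSpan ℝ F₁).direction = l - 1)
    (hdim₂ : Module.finrank ℝ (affineSpan ℝ F₂).direction = l - 1) :
    F₁ = F₂ := by
  have key : ∀ F : Set (Fin n → ℝ), IsFaceOf P F → F ⊆ (L : Set (Fin n → ℝ)) →
      Module.finrank ℝ (affineSpan ℝ F).direction = l - 1 →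
      affineSpan ℝ F = affineSpan ℝ ((L : Set (Fin n → ℝ)) ∩ P) := by
    intro F hF hFL hd
    have hsub : F ⊆ (L : Set (Fin n → ℝ)) ∩ P := Set.subset_inter hFL hF.2.2.subset
    have hle := affineSpan_mono ℝ hsub
    obtain ⟨x, hx⟩ := hF.1
    have hlt : Module.finrank ℝ (affineSpan ℝ ((L : Set (Fin n → ℝ)) ∩ P)).direction < l := by
      rcases hLP with h | h
      · exact absurd (hsub hx) (by rw [h]; exact Set.notMem_empty x)
      · exact h
    have hdir := Submodule.eq_of_le_of_finrank_le (AffineSubspace.direction_le hle) (by omega)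
    exact AffineSubspace.ext_of_direction_eq hdir
      ⟨x, subset_affineSpan ℝ _ hx, subset_affineSpan ℝ _ (hsub hx)⟩
  have h := (key F₁ hF₁ hF₁L hdim₁).trans (key F₂ hF₂ hF₂L hdim₂).symm
  apply Set.Subset.antisymm
  · intro y hy
    exact face_aux P F₂ hF₂ y (h ▸ subset_affineSpan ℝ _ hy) (hF₁.2.2.subset hy)
  · intro y hy
    exact face_aux P F₁ hF₁ y (h ▸ subset_affineSpan ℝ _ hy) (hF₂.2.2.subset hy)
end

section
/- For any three pairwise distinct indices i, j, k ∈ {1, …, d}, the linear forms ℓᵢ, ℓⱼ, ℓ_k are linearly independent over ℝ. Equivalently, no three facet hyperplanes of a full-dimensional convex polytope contain a common projective linear subspace of codimension 2 (in particular, a convex polytope cannot have three pairwise parallel facet hyperplanes). -/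
open MvPolynomial Finset Classical

noncomputable section

/-- The homogenization embedding `y ↦ (1, y₁, …, yₙ)`. -/
def lift1 {n : ℕ} (y : Fin n → ℝ) : Fin (n + 1) → ℝ := Fin.cons 1 y

/-- The polytope `P = {y ∈ ℝⁿ | ℓᵢ(1,y) ≥ 0 for all i}`. -/
def polytopeOf {n d : ℕ} (ℓ : Fin d → MvPolynomial (Fin (n + 1)) ℝ) : Set (Fin n → ℝ) :=
  {y | ∀ i, 0 ≤ eval (lift1 y) (ℓ i)}

/-- The facet `Fᵢ = {y ∈ P | ℓᵢ(1,y) = 0}`. -/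
def facetOf {n d : ℕ} (ℓ : Fin d → MvPolynomial (Fin (n + 1)) ℝ) (i : Fin d) :
    Set (Fin n → ℝ) :=
  {y ∈ polytopeOf ℓ | eval (lift1 y) (ℓ i) = 0}

/-- The flat `F_v = {i | ℓᵢ(v) = 0}` of all facet hyperplanes through `v`. -/
def flatOf {n d : ℕ} (ℓ : Fin d → MvPolynomial (Fin (n + 1)) ℝ) (v : Fin (n + 1) → ℝ) :
    Finset (Fin d) :=
  Finset.univ.filter fun i => eval v (ℓ i) = 0

/-- The rank `r_v`: the dimension of the linear span of `{ℓᵢ : i ∈ F_v}`. -/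
def rkOf {n d : ℕ} (ℓ : Fin d → MvPolynomial (Fin (n + 1)) ℝ) (v : Fin (n + 1) → ℝ) : ℕ :=
  Module.finrank ℝ (Submodule.span ℝ (ℓ '' (flatOf ℓ v : Set (Fin d))))

/-- The nullity `nl_v = |F_v| − r_v`. -/
def nlOf {n d : ℕ} (ℓ : Fin d → MvPolynomial (Fin (n + 1)) ℝ) (v : Fin (n + 1) → ℝ) : ℕ :=
  (flatOf ℓ v).card - rkOf ℓ v

/-- The set `P_v = {y ∈ P | ℓᵢ(1,y) = 0 for all i ∈ F_v}`. -/
def faceOf {n d : ℕ} (ℓ : Fin d → MvPolynomial (Fin (n + 1)) ℝ) (v : Fin (n + 1) → ℝ) :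
    Set (Fin n → ℝ) :=
  {y ∈ polytopeOf ℓ | ∀ i ∈ flatOf ℓ v, eval (lift1 y) (ℓ i) = 0}

/-- The order `ord_P(L_v)`: equal to `nl_v` if `P_v` is nonempty with affine span of
dimension `n − r_v`, and to `nl_v + 1` otherwise. -/
def ordOf {n d : ℕ} (ℓ : Fin d → MvPolynomial (Fin (n + 1)) ℝ) (v : Fin (n + 1) → ℝ) : ℕ :=
  if (faceOf ℓ v).Nonempty ∧
      Module.finrank ℝ (affineSpan ℝ (faceOf ℓ v)).direction = n - rkOf ℓ v
  then nlOf ℓ v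
  else nlOf ℓ v + 1

/-- The ideal `I_v ⊆ ℂ[X₀,…,Xₙ]` generated by all homogeneous degree-1 polynomials
vanishing at the real point `v`. -/
def pointIdealC {n : ℕ} (v : Fin (n + 1) → ℝ) : Ideal (MvPolynomial (Fin (n + 1)) ℂ) :=
  Ideal.span {p | p.IsHomogeneous 1 ∧ eval (fun i => (v i : ℂ)) p = 0}

/-- The ideal `I_v ⊆ ℝ[X₀,…,Xₙ]` generated by all homogeneous degree-1 polynomials
vanishing at `v`. -/
def pointIdealR {n : ℕ} (v : Fin (n + 1) → ℝ) : Ideal (MvPolynomial (Fin (n + 1)) ℝ) :=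
  Ideal.span {p | p.IsHomogeneous 1 ∧ eval v p = 0}

/-- Complexification of a real polynomial. -/
def toC {n : ℕ} (p : MvPolynomial (Fin (n + 1)) ℝ) : MvPolynomial (Fin (n + 1)) ℂ :=
  map (algebraMap ℝ ℂ) p

/-- The hypotheses on the facet equations `ℓ₁, …, ℓ_d` of a full-dimensional compact convex
polytope `P ⊆ ℝⁿ`: the `ℓᵢ` are pairwise non-proportional homogeneous degree-1 polynomials,
`P` is compact with affine span all of `ℝⁿ`, and each facet `Fᵢ` is nonempty with affine
span of dimension `n − 1`. -/
structure IsPolytopeSetup {n d : ℕ} (ℓ : Fin d → MvPolynomial (Fin (n + 1)) ℝ) : Prop where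
  hn : 1 ≤ n
  hd : n + 1 ≤ d
  hhom : ∀ i, (ℓ i).IsHomogeneous 1
  hne : ∀ i, ℓ i ≠ 0
  hprop : ∀ i j, i ≠ j → ∀ c : ℝ, c • ℓ i ≠ ℓ j
  hcpt : IsCompact (polytopeOf ℓ)
  hfull : affineSpan ℝ (polytopeOf ℓ) = ⊤
  hfacet_ne : ∀ i, (facetOf ℓ i).Nonempty
  hfacet : ∀ i, Module.finrank ℝ (affineSpan ℝ (facetOf ℓ i)).direction = n - 1


lemma hom1_lin {n : ℕ} (p : MvPolynomial (Fin (n + 1)) ℝ) (hp : p.IsHomogeneous 1) :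
    ∃ A : (Fin (n + 1) → ℝ) →ₗ[ℝ] ℝ, ∀ v, eval v p = A v := by
  have h : p ∈ homogeneousSubmodule (Fin (n + 1)) ℝ 1 := hp
  rw [homogeneousSubmodule_one_eq_span_X] at h
  induction h using Submodule.span_induction with
  | mem x hx =>
    obtain ⟨i, rfl⟩ := hx
    exact ⟨LinearMap.proj i, fun v => by simp⟩
  | zero => exact ⟨0, fun v => by simp⟩
  | add x y hx hy ihx ihy =>
    obtain ⟨A, hA⟩ := ihx (by
      rw [← homogeneousSubmodule_one_eq_span_X] at hx; exact hx)
    obtain ⟨B, hB⟩ := ihy (by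
      rw [← homogeneousSubmodule_one_eq_span_X] at hy; exact hy)
    exact ⟨A + B, fun v => by simp [hA, hB]⟩
  | smul a x hx ihx =>
    obtain ⟨A, hA⟩ := ihx (by
      rw [← homogeneousSubmodule_one_eq_span_X] at hx; exact hx)
    exact ⟨a • A, fun v => by simp [hA]⟩

lemma prop_of_vanish {n d : ℕ}
    (ℓ : Fin d → MvPolynomial (Fin (n + 1)) ℝ) (hP : IsPolytopeSetup ℓ)
    (i : Fin d) (m : MvPolynomial (Fin (n + 1)) ℝ) (hm : m.IsHomogeneous 1)
    (hv : ∀ y ∈ facetOf ℓ i, eval (lift1 y) m = 0) : ∃ c : ℝ, c • ℓ i = m := by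
  obtain ⟨A, hA⟩ := hom1_lin _ (hP.hhom i)
  obtain ⟨M, hM⟩ := hom1_lin _ hm
  obtain ⟨y0, hy0⟩ := hP.hfacet_ne i
  let ι : (Fin n → ℝ) →ₗ[ℝ] (Fin (n + 1) → ℝ) :=
    { toFun := fun y => Fin.cons 0 y
      map_add' := fun x y => by
        ext j; refine Fin.cases ?_ (fun j => ?_) j <;> simp
      map_smul' := fun c y => by
        ext j; refine Fin.cases ?_ (fun j => ?_) j <;> simp }
  have hdec : ∀ v : Fin (n + 1) → ℝ, v = v 0 • lift1 y0 + ι (fun j => v j.succ - v 0 * y0 j) := by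
    intro v
    ext j
    refine Fin.cases ?_ (fun j => ?_) j <;> simp [lift1, ι]
  have hdiff : ∀ x y : Fin n → ℝ, ι (x - y) = lift1 x - lift1 y := by
    intro x y
    ext j
    refine Fin.cases ?_ (fun j => ?_) j <;> simp [lift1, ι]
  have hker : ∀ B : (Fin (n + 1) → ℝ) →ₗ[ℝ] ℝ, (∀ y ∈ facetOf ℓ i, B (lift1 y) = 0) →
      vectorSpan ℝ (facetOf ℓ i) ≤ LinearMap.ker (B ∘ₗ ι) := by
    intro B hB
    rw [vectorSpan_def, Submodule.span_le]
    rintro _ ⟨x, hx, y, hy, rfl⟩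
    simp [hdiff, hB x hx, hB y hy]
  have hA0 : ∀ y ∈ facetOf ℓ i, A (lift1 y) = 0 := fun y hy => by rw [← hA]; exact hy.2
  have hM0 : ∀ y ∈ facetOf ℓ i, M (lift1 y) = 0 := fun y hy => by rw [← hM]; exact hv y hy
  have hne : A ∘ₗ ι ≠ 0 := by
    intro h0
    apply hP.hne i
    apply MvPolynomial.funext
    intro v
    rw [hA, hdec v, map_add, map_smul, hA0 y0 hy0]
    have := LinearMap.congr_fun h0 (fun j => v j.succ - v 0 * y0 j)
    simpa using this
  have hfr := hP.hfacet i
  rw [direction_affineSpan] at hfr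
  have hk : Module.finrank ℝ (LinearMap.ker (A ∘ₗ ι)) + 1 = n := by
    have := Module.Dual.finrank_ker_add_one_of_ne_zero (f := A ∘ₗ ι) hne
    simpa using this
  have heq : vectorSpan ℝ (facetOf ℓ i) = LinearMap.ker (A ∘ₗ ι) :=
    Submodule.eq_of_le_of_finrank_eq (hker A hA0) (by omega)
  have hle : LinearMap.ker (A ∘ₗ ι) ≤ LinearMap.ker (M ∘ₗ ι) := heq ▸ hker M hM0
  obtain ⟨w, hw⟩ : ∃ w, (A ∘ₗ ι) w ≠ 0 := by
    by_contra! h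
    exact hne (LinearMap.ext h)
  refine ⟨(M ∘ₗ ι) w / (A ∘ₗ ι) w, ?_⟩
  apply MvPolynomial.funext
  intro v
  rw [smul_eval, hA, hM, hdec v, map_add, map_add, map_smul, map_smul, hA0 y0 hy0, hM0 y0 hy0]
  set u := (fun j : Fin n => v j.succ - v 0 * y0 j)
  have h1 : (A ∘ₗ ι) w • u - (A ∘ₗ ι) u • w ∈ LinearMap.ker (M ∘ₗ ι) := by
    apply hle
    rw [LinearMap.mem_ker, map_sub, map_smul, map_smul, smul_eq_mul, smul_eq_mul]
    ring
  rw [LinearMap.mem_ker, map_sub, map_smul, map_smul, smul_eq_mul, smul_eq_mul] at h1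
  change _ * (_ + (A ∘ₗ ι) u) = _ + (M ∘ₗ ι) u
  rw [smul_zero, zero_add, zero_add]
  field_simp
  linarith

lemma same_sign {n d : ℕ}
    (ℓ : Fin d → MvPolynomial (Fin (n + 1)) ℝ) (hP : IsPolytopeSetup ℓ)
    (i j k : Fin d) (hik : i ≠ k) (hjk : j ≠ k) (a b c : ℝ)
    (h : a • ℓ i + b • ℓ j + c • ℓ k = 0) (hab : 0 ≤ a * b) : a = 0 ∧ b = 0 ∧ c = 0 := by
  have hz : ∀ y ∈ facetOf ℓ k, a * eval (lift1 y) (ℓ i) = 0 ∧ b * eval (lift1 y) (ℓ j) = 0 := by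
    intro y hy
    have h1 := congrArg (eval (lift1 y)) h
    simp only [map_add, smul_eval, map_zero, hy.2, mul_zero, add_zero] at h1
    have hi := hy.1 i
    have hj := hy.1 j
    have h2 : 0 ≤ (a * eval (lift1 y) (ℓ i)) * (b * eval (lift1 y) (ℓ j)) := by
      have := mul_nonneg hab (mul_nonneg hi hj)
      linarith
    constructor <;> nlinarith
  have ha : a = 0 := by
    by_contra ha
    obtain ⟨t, ht⟩ := prop_of_vanish ℓ hP k (ℓ i) (hP.hhom i)
      (fun y hy => (mul_eq_zero.1 (hz y hy).1).resolve_left ha)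
    exact hP.hprop k i hik.symm t ht
  have hb : b = 0 := by
    by_contra hb
    obtain ⟨t, ht⟩ := prop_of_vanish ℓ hP k (ℓ j) (hP.hhom j)
      (fun y hy => (mul_eq_zero.1 (hz y hy).2).resolve_left hb)
    exact hP.hprop k j hjk.symm t ht
  refine ⟨ha, hb, ?_⟩
  subst ha hb
  simpa [hP.hne k] using h

/-- No three facet hyperplanes of a full-dimensional convex polytope meet
in a common codimension-2 projective linear subspace: for pairwise distinct indices
`i, j, k`, the linear forms `ℓᵢ, ℓⱼ, ℓ_k` are linearly independent over `ℝ`. -/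
theorem facet_forms_three_linearly_independent {n d : ℕ}
    (ℓ : Fin d → MvPolynomial (Fin (n + 1)) ℝ) (hP : IsPolytopeSetup ℓ)
    (i j k : Fin d) (hij : i ≠ j) (hik : i ≠ k) (hjk : j ≠ k) :
    LinearIndependent ℝ ![ℓ i, ℓ j, ℓ k] := by
  rw [Fintype.linearIndependent_iff]
  intro g hg
  simp only [Fin.sum_univ_three, Matrix.cons_val] at hg
  have key : g 0 = 0 ∧ g 1 = 0 ∧ g 2 = 0 := by
    rcases le_or_gt 0 (g 0 * g 1) with h | h
    · exact same_sign ℓ hP i j k hik hjk _ _ _ hg h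
    rcases le_or_gt 0 (g 0 * g 2) with h' | h'
    · have := same_sign ℓ hP i k j hij hjk.symm (g 0) (g 2) (g 1) (by rw [← hg]; abel) h'
      tauto
    · have h3 : 0 ≤ g 1 * g 2 := by
        have := mul_pos_of_neg_of_neg h h'
        by_contra! h4
        nlinarith [sq_nonneg (g 0)]
      have := same_sign ℓ hP j k i hij.symm hik.symm (g 1) (g 2) (g 0) (by rw [← hg]; abel) h3
      tauto
  intro x
  fin_cases x
  exacts [key.1, key.2.1, key.2.2]

end
end
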